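/- There exists v₀ ∈ ℝ⁶ that minimizes μ over ℝ⁶ (μ(v₀) ≤ μ(v) for all v ∈ ℝ⁶) and whose configuration satisfies condition K₂. -/

import Mathlib

open Real MeasureTheory

noncomputable def pt (x y : ℝ) : EuclideanSpace ℝ (Fin 2) :=
  (WithLp.equiv 2 (Fin 2 → ℝ)).symm ![x, y]

noncomputable def sqVertex (x y a : ℝ) (k : Fin 4) : EuclideanSpace ℝ (Fin 2) :=
  pt (x + Real.sqrt 2 / 6 * Real.cos (a + ((k : ℕ) : ℝ) * (Real.pi / 2)))
     (y + Real.sqrt 2 / 6 * Real.sin (a + ((k : ℕ) : ℝ) * (Real.pi / 2)))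

noncomputable def triVertex (x y b : ℝ) (k : Fin 3) : EuclideanSpace ℝ (Fin 2) :=
  pt (x + Real.sqrt 3 / 6 * Real.cos (b + ((k : ℕ) : ℝ) * (2 * Real.pi / 3)))
     (y + Real.sqrt 3 / 6 * Real.sin (b + ((k : ℕ) : ℝ) * (2 * Real.pi / 3)))

noncomputable def config (x1 y1 a x2 y2 b : ℝ) : Set (EuclideanSpace ℝ (Fin 2)) :=
  {pt 0 0, pt 1 0} ∪ Set.range (sqVertex x1 y1 a) ∪ Set.range (triVertex x2 y2 b)

noncomputable def area (x1 y1 a x2 y2 b : ℝ) : ℝ :=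
  (volume (convexHull ℝ (config x1 y1 a x2 y2 b))).toReal

noncomputable def segEF : Set (EuclideanSpace ℝ (Fin 2)) := segment ℝ (pt 0 0) (pt 1 0)

def K2 (x1 y1 a x2 y2 b : ℝ) : Prop :=
  (∀ p ∈ convexHull ℝ (Set.range (sqVertex x1 y1 a)) ∪
        convexHull ℝ (Set.range (triVertex x2 y2 b)),
      Metric.infDist p segEF ≤ 1 ∧ p 1 ∈ Set.Icc (-0.46 : ℝ) 0.46) ∧
  (convexHull ℝ (Set.range (sqVertex x1 y1 a)) ∩ segEF).Nonempty ∧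
  (convexHull ℝ (Set.range (triVertex x2 y2 b)) ∩ segEF).Nonempty

/-!
Every configuration of area at most `0.23` can be replaced, without increasing the area, by one
that satisfies `K2`; up to full turns of the square and the triangle the latter form a compact
family. Since the area is lower semicontinuous and an explicit configuration has area at most
`(√3 + 1) / 12 < 0.23`, a global minimiser exists, and replacing it gives one satisfying `K2`.

For the replacement, apply a rigid motion so that the convex hull `H` has a diameter from `(0, 0)`
to `(D, 0)`, where `1 ≤ D`. As `H` lies in the vertical strip over this diameter, the square and the
triangle stay inside `H` when they are moved vertically towards the diameter until they touch it.
Vertical chords of `H` bound its area from below: this keeps the points of `H` at height at most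
`0.46`, gives `D ≤ 3 / 2` since the triangle has a vertical chord of length `√3 / 4`, and puts the
two contact points at distance at most `1`. So some unit segment on the diameter contains both of
them; it takes the place of `EF`.

For lower semicontinuity, the hull contains the incircle of the square, of radius `1 / 6`. Hence
displacing the vertices by less than `ε` enlarges the hull at most to its homothetic image of ratio
`1 + 6 ε`.
-/

/-- The Euclidean plane. -/
abbrev Plane := EuclideanSpace ℝ (Fin 2)

section Coordinates

@[simp] lemma pt_apply_zero (x y : ℝ) : pt x y 0 = x := rfl

@[simp] lemma pt_apply_one (x y : ℝ) : pt x y 1 = y := rfl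

lemma plane_ext {p q : Plane} (h₀ : p 0 = q 0) (h₁ : p 1 = q 1) : p = q := by
  ext i
  fin_cases i
  exacts [h₀, h₁]

@[simp] lemma pt_eta (p : Plane) : pt (p 0) (p 1) = p := plane_ext rfl rfl

lemma pt_add_pt (x y u v : ℝ) : pt x y + pt u v = pt (x + u) (y + v) := plane_ext rfl rfl

lemma smul_pt (r x y : ℝ) : r • pt x y = pt (r * x) (r * y) := plane_ext rfl rfl

lemma plane_dist_sq (p q : Plane) : dist p q ^ 2 = (p 0 - q 0) ^ 2 + (p 1 - q 1) ^ 2 := by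
  simp [EuclideanSpace.dist_sq_eq, Real.dist_eq]

lemma abs_apply_sub_le_dist (p q : Plane) (i : Fin 2) : |p i - q i| ≤ dist p q := by
  simpa [dist_eq_norm] using PiLp.norm_apply_le (p - q) i

lemma continuous_pt {X : Type*} [TopologicalSpace X] {f g : X → ℝ} (hf : Continuous f)
    (hg : Continuous g) : Continuous fun x ↦ pt (f x) (g x) :=
  (PiLp.continuous_toLp 2 _).comp <| continuous_pi fun i ↦ by
    fin_cases i
    exacts [hf, hg]

/-- The unit vector at angle `θ` from the first coordinate axis. -/
noncomputable def direction (θ : ℝ) : Plane := pt (cos θ) (sin θ)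

lemma norm_direction (θ : ℝ) : ‖direction θ‖ = 1 := by
  simp [direction, EuclideanSpace.norm_eq]

lemma exists_norm_smul_direction (v : Plane) : ∃ θ, v = ‖v‖ • direction θ := by
  have hv : ‖v‖ = ‖(⟨v 0, v 1⟩ : ℂ)‖ := by
    simp [EuclideanSpace.norm_eq, Complex.norm_eq_sqrt_sq_add_sq]
  refine ⟨Complex.arg ⟨v 0, v 1⟩, ?_⟩
  rw [hv, direction, smul_pt, Complex.norm_mul_cos_arg, Complex.norm_mul_sin_arg, pt_eta]

/-- The rotation of the plane by the angle `θ` about the origin, transported from `ℂ`. -/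
noncomputable def planeRotation (θ : ℝ) : Plane ≃ₗᵢ[ℝ] Plane :=
  Complex.orthonormalBasisOneI.repr.symm.trans
    ((rotation (Circle.exp θ)).trans Complex.orthonormalBasisOneI.repr)

lemma planeRotation_apply (θ : ℝ) (p : Plane) :
    planeRotation θ p = pt (cos θ * p 0 - sin θ * p 1) (sin θ * p 0 + cos θ * p 1) := by
  apply plane_ext <;>
    simp [planeRotation, rotation_apply, Complex.orthonormalBasisOneI,
      Complex.exp_ofReal_mul_I_re, Complex.exp_ofReal_mul_I_im]
  ring

lemma planeRotation_direction (θ φ : ℝ) :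
    planeRotation θ (direction φ) = direction (φ + θ) := by
  rw [planeRotation_apply, direction, direction, cos_add, sin_add]
  apply plane_ext <;> simp only [pt_apply_zero, pt_apply_one] <;> ring

/-- The orientation-preserving motion that rotates by `θ` about the origin and then translates by
`c`. -/
noncomputable def rigidMotion (c : Plane) (θ : ℝ) : Plane ≃ᵃⁱ[ℝ] Plane :=
  (planeRotation θ).toAffineIsometryEquiv.trans (AffineIsometryEquiv.constVAdd ℝ Plane c)

lemma rigidMotion_apply (c : Plane) (θ : ℝ) (p : Plane) :
    rigidMotion c θ p = c + planeRotation θ p := rfl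

lemma measurePreserving_rigidMotion (c : Plane) (θ : ℝ) :
    MeasurePreserving (rigidMotion c θ) :=
  (measurePreserving_add_left volume c).comp (planeRotation θ).measurePreserving

lemma rigidMotion_add_smul_direction (d c : Plane) (θ r φ : ℝ) :
    rigidMotion d θ (c + r • direction φ) =
      rigidMotion d θ c + r • direction (φ + θ) := by
  simp only [rigidMotion_apply, map_add, map_smul, planeRotation_direction, add_assoc]

lemma dist_add_smul_direction_self (c : Plane) (r φ : ℝ) : dist (c + r • direction φ) c = |r| := by
  rw [dist_self_add_left, norm_smul, norm_direction, mul_one, Real.norm_eq_abs]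

lemma dist_add_smul_direction_sq (c : Plane) (r φ ψ : ℝ) :
    dist (c + r • direction φ) (c + r • direction ψ) ^ 2 = 2 * r ^ 2 * (1 - cos (φ - ψ)) := by
  rw [plane_dist_sq, cos_sub]
  simp only [direction, PiLp.add_apply, PiLp.smul_apply, pt_apply_zero, pt_apply_one, smul_eq_mul]
  linear_combination r ^ 2 * (cos_sq_add_sin_sq φ) + r ^ 2 * (cos_sq_add_sin_sq ψ)

lemma sqVertex_eq (x y a : ℝ) (k : Fin 4) :
    sqVertex x y a k = pt x y + (√2 / 6) • direction (a + (k : ℕ) * (π / 2)) :=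
  plane_ext rfl rfl

lemma triVertex_eq (x y b : ℝ) (k : Fin 3) :
    triVertex x y b k = pt x y + (√3 / 6) • direction (b + (k : ℕ) * (2 * π / 3)) :=
  plane_ext rfl rfl

lemma rigidMotion_sqVertex {x y u v a θ : ℝ} {c : Plane}
    (h : rigidMotion c θ (pt x y) = pt u v) (k : Fin 4) :
    rigidMotion c θ (sqVertex x y a k) = sqVertex u v (a + θ) k := by
  rw [sqVertex_eq, rigidMotion_add_smul_direction, h, sqVertex_eq, add_right_comm]

lemma rigidMotion_triVertex {x y u v b θ : ℝ} {c : Plane}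
    (h : rigidMotion c θ (pt x y) = pt u v) (k : Fin 3) :
    rigidMotion c θ (triVertex x y b k) = triVertex u v (b + θ) k := by
  rw [triVertex_eq, rigidMotion_add_smul_direction, h, triVertex_eq, add_right_comm]

lemma pt_add_sqVertex (u v x y a : ℝ) (k : Fin 4) :
    pt u v + sqVertex x y a k = sqVertex (u + x) (v + y) a k := by
  rw [sqVertex_eq, sqVertex_eq, ← pt_add_pt, add_assoc]

lemma pt_add_triVertex (u v x y b : ℝ) (k : Fin 3) :
    pt u v + triVertex x y b k = triVertex (u + x) (v + y) b k := by
  rw [triVertex_eq, triVertex_eq, ← pt_add_pt, add_assoc]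

end Coordinates

section Slices

lemma volume_eq_volume_preimage_pt {K : Set Plane} (hK : MeasurableSet K) :
    volume K = volume {z : ℝ × ℝ | pt z.1 z.2 ∈ K} := by
  have h : MeasurePreserving (fun z : ℝ × ℝ ↦ pt z.1 z.2) :=
    (PiLp.volume_preserving_toLp (Fin 2)).comp (volume_preserving_finTwoArrow ℝ).symm
  exact (h.measure_preimage hK.nullMeasurableSet).symm

lemma measurableSet_preimage_pt {K : Set Plane} (hK : MeasurableSet K) :
    MeasurableSet {z : ℝ × ℝ | pt z.1 z.2 ∈ K} :=
  (continuous_pt continuous_fst continuous_snd).measurable hK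

lemma volume_eq_lintegral_vertical {K : Set Plane} (hK : MeasurableSet K) :
    volume K = ∫⁻ x, volume {y | pt x y ∈ K} := by
  rw [volume_eq_volume_preimage_pt hK, Measure.volume_eq_prod,
    Measure.prod_apply (measurableSet_preimage_pt hK)]
  rfl

lemma volume_eq_lintegral_horizontal {K : Set Plane} (hK : MeasurableSet K) :
    volume K = ∫⁻ y, volume {x | pt x y ∈ K} := by
  rw [volume_eq_volume_preimage_pt hK, Measure.volume_eq_prod,
    Measure.prod_apply_symm (measurableSet_preimage_pt hK)]
  rfl

lemma setLIntegral_ofReal_lineMap {a b p q : ℝ} (hab : a < b) (hp : 0 ≤ p) (hq : 0 ≤ q) :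
    ∫⁻ x in Set.Ioc a b, ENNReal.ofReal (((b - x) * p + (x - a) * q) / (b - a)) =
      ENNReal.ofReal ((b - a) * (p + q) / 2) := by
  have hcont : Continuous fun x ↦ ((b - x) * p + (x - a) * q) / (b - a) := by fun_prop
  rw [← ofReal_integral_eq_lintegral_ofReal (hcont.integrableOn_Ioc)]
  · have hba : b - a ≠ 0 := (sub_pos.2 hab).ne'
    have hderiv : ∀ x ∈ Set.uIcc a b, HasDerivAt
        (fun x ↦ ((x - a) ^ 2 * q - (b - x) ^ 2 * p) / (2 * (b - a)))
        (((b - x) * p + (x - a) * q) / (b - a)) x := fun x _ ↦ by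
      refine (((((hasDerivAt_id' x).sub_const a).pow 2).mul_const q).sub
        ((((hasDerivAt_id' x).const_sub b).pow 2).mul_const p)).div_const (2 * (b - a))
        |>.congr_deriv ?_
      field_simp
      ring
    rw [← intervalIntegral.integral_of_le hab.le,
      intervalIntegral.integral_eq_sub_of_hasDerivAt hderiv (hcont.intervalIntegrable a b)]
    congr 1
    field_simp
    ring
  · filter_upwards [ae_restrict_mem measurableSet_Ioc] with x hx
    have := hx.1; have := hx.2
    exact div_nonneg (by nlinarith) (by linarith)

end Slices

section VerticalChords

/-- `H` contains the endpoints of a vertical segment of length `ℓ` with abscissa `x`. -/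
def HasVerticalChord (H : Set Plane) (x ℓ : ℝ) : Prop :=
  ∃ y, pt x y ∈ H ∧ pt x (y + ℓ) ∈ H

variable {H : Set Plane}

lemma hasVerticalChord_zero {x y : ℝ} (h : pt x y ∈ H) : HasVerticalChord H x 0 :=
  ⟨y, h, by rwa [add_zero]⟩

lemma HasVerticalChord.combo (hH : Convex ℝ H) {x₁ x₂ ℓ₁ ℓ₂ s t : ℝ}
    (h₁ : HasVerticalChord H x₁ ℓ₁) (h₂ : HasVerticalChord H x₂ ℓ₂)
    (hs : 0 ≤ s) (ht : 0 ≤ t) (hst : s + t = 1) :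
    HasVerticalChord H (s * x₁ + t * x₂) (s * ℓ₁ + t * ℓ₂) := by
  obtain ⟨y₁, hy₁, hz₁⟩ := h₁
  obtain ⟨y₂, hy₂, hz₂⟩ := h₂
  refine ⟨s * y₁ + t * y₂, ?_, ?_⟩
  · simpa only [smul_pt, pt_add_pt] using hH hy₁ hy₂ hs ht hst
  · convert hH hz₁ hz₂ hs ht hst using 1
    simp only [smul_pt, pt_add_pt]
    ring_nf

lemma ordConnected_vertical_slice (hH : Convex ℝ H) (x : ℝ) :
    Set.OrdConnected {y | pt x y ∈ H} := by
  refine Convex.ordConnected fun u hu v hv s t hs ht hst ↦ ?_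
  have := hH hu hv hs ht hst
  rwa [smul_pt, smul_pt, pt_add_pt, ← add_mul, hst, one_mul] at this

lemma hasVerticalChord_of_le_dist (hH : Convex ℝ H) {p q : Plane} (hp : p ∈ H) (hq : q ∈ H)
    (hpq : p 0 = q 0) {ℓ : ℝ} (hℓ : 0 ≤ ℓ) (hle : ℓ ≤ dist p q) : HasVerticalChord H (p 0) ℓ := by
  wlog hy : p 1 ≤ q 1 generalizing p q
  · rw [hpq]
    exact this hq hp hpq.symm (dist_comm p q ▸ hle) (le_of_not_ge hy)
  have hdist : dist p q = q 1 - p 1 := by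
    rw [← abs_of_nonneg dist_nonneg, ← abs_of_nonneg (sub_nonneg.2 hy), ← sq_eq_sq_iff_abs_eq_abs,
      plane_dist_sq, hpq]
    ring
  have hp' : pt (p 0) (p 1) ∈ H := by rwa [pt_eta]
  have hq' : pt (p 0) (q 1) ∈ H := by rwa [hpq, pt_eta]
  exact ⟨p 1, hp', (ordConnected_vertical_slice hH (p 0)).out hp' hq'
    ⟨by linarith, by linarith⟩⟩

lemma HasVerticalChord.ofReal_le_volume (hH : Convex ℝ H) {x ℓ : ℝ}
    (h : HasVerticalChord H x ℓ) : ENNReal.ofReal ℓ ≤ volume {y | pt x y ∈ H} := by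
  obtain ⟨y, hy, hz⟩ := h
  calc ENNReal.ofReal ℓ = volume (Set.Icc y (y + ℓ)) := by simp
    _ ≤ _ := measure_mono ((ordConnected_vertical_slice hH x).out hy hz)

lemma HasVerticalChord.le_setLIntegral (hH : Convex ℝ H) {a b p q : ℝ} (hab : a ≤ b)
    (hp : 0 ≤ p) (hq : 0 ≤ q) (ha : HasVerticalChord H a p) (hb : HasVerticalChord H b q) :
    ENNReal.ofReal ((b - a) * (p + q) / 2) ≤
      ∫⁻ x in Set.Ioc a b, volume {y | pt x y ∈ H} := by
  rcases hab.eq_or_lt with rfl | hab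
  · simp
  rw [← setLIntegral_ofReal_lineMap hab hp hq]
  refine setLIntegral_mono' measurableSet_Ioc fun x hx ↦
    HasVerticalChord.ofReal_le_volume hH ?_
  have hba : 0 < b - a := sub_pos.2 hab
  have h := ha.combo hH hb (s := (b - x) / (b - a)) (t := (x - a) / (b - a))
    (div_nonneg (sub_nonneg.2 hx.2) hba.le) (div_nonneg (sub_nonneg.2 hx.1.le) hba.le)
    (by field_simp; ring)
  convert h using 1
  · field_simp
    ring
  · field_simp

lemma volume_ge_of_two_chords (hH : Convex ℝ H) (hHm : MeasurableSet H) {D x₁ x₂ ℓ₁ ℓ₂ : ℝ}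
    (hE : pt 0 0 ∈ H) (hF : pt D 0 ∈ H) (hx₁ : 0 ≤ x₁) (hx : x₁ ≤ x₂) (hx₂ : x₂ ≤ D)
    (hℓ₁ : 0 ≤ ℓ₁) (hℓ₂ : 0 ≤ ℓ₂)
    (h₁ : HasVerticalChord H x₁ ℓ₁) (h₂ : HasVerticalChord H x₂ ℓ₂) :
    ENNReal.ofReal ((x₂ * ℓ₁ + (D - x₁) * ℓ₂) / 2) ≤ volume H := by
  set w : ℝ → ENNReal := fun x ↦ volume {y | pt x y ∈ H}
  have hleft : ENNReal.ofReal ((x₁ - 0) * (0 + ℓ₁) / 2) ≤ ∫⁻ x in Set.Ioc 0 x₁, w x :=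
    HasVerticalChord.le_setLIntegral hH hx₁ le_rfl hℓ₁ (hasVerticalChord_zero hE) h₁
  have hmid : ENNReal.ofReal ((x₂ - x₁) * (ℓ₁ + ℓ₂) / 2) ≤ ∫⁻ x in Set.Ioc x₁ x₂, w x :=
    HasVerticalChord.le_setLIntegral hH hx hℓ₁ hℓ₂ h₁ h₂
  have hright : ENNReal.ofReal ((D - x₂) * (ℓ₂ + 0) / 2) ≤ ∫⁻ x in Set.Ioc x₂ D, w x :=
    HasVerticalChord.le_setLIntegral hH hx₂ hℓ₂ le_rfl h₂ (hasVerticalChord_zero hF)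
  have hunion : ∫⁻ x in Set.Ioc 0 D, w x =
      (∫⁻ x in Set.Ioc 0 x₁, w x) + (∫⁻ x in Set.Ioc x₁ x₂, w x) +
        ∫⁻ x in Set.Ioc x₂ D, w x := by
    rw [← lintegral_union measurableSet_Ioc (Set.Ioc_disjoint_Ioc_of_le le_rfl),
      Set.Ioc_union_Ioc_eq_Ioc hx₁ hx,
      ← lintegral_union measurableSet_Ioc (Set.Ioc_disjoint_Ioc_of_le le_rfl),
      Set.Ioc_union_Ioc_eq_Ioc (hx₁.trans hx) hx₂]
  calc ENNReal.ofReal ((x₂ * ℓ₁ + (D - x₁) * ℓ₂) / 2)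
      = ENNReal.ofReal ((x₁ - 0) * (0 + ℓ₁) / 2) +
          ENNReal.ofReal ((x₂ - x₁) * (ℓ₁ + ℓ₂) / 2) +
            ENNReal.ofReal ((D - x₂) * (ℓ₂ + 0) / 2) := by
        have := sub_nonneg.2 hx
        have := sub_nonneg.2 hx₂
        rw [← ENNReal.ofReal_add (by positivity) (by positivity),
          ← ENNReal.ofReal_add (by positivity) (by positivity)]
        ring_nf
    _ ≤ ∫⁻ x in Set.Ioc 0 D, w x := hunion ▸ add_le_add (add_le_add hleft hmid) hright
    _ ≤ ∫⁻ x, w x := setLIntegral_le_lintegral _ _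
    _ = volume H := (volume_eq_lintegral_vertical hHm).symm

end VerticalChords

section Kite

lemma convexHull_subset_halfPlane {X : Set Plane} {α β γ : ℝ}
    (h : ∀ p ∈ X, α * p 0 + β * p 1 ≤ γ) : ∀ p ∈ convexHull ℝ X, α * p 0 + β * p 1 ≤ γ :=
  convexHull_min h (convex_halfSpace_le (f := fun p : Plane ↦ α * p 0 + β * p 1)
    ⟨fun p q ↦ by simp only [PiLp.add_apply]; ring,
      fun r p ↦ by simp only [PiLp.smul_apply, smul_eq_mul]; ring⟩ γ)

/-- The quadrilateral with diagonal from `(0, 0)` to `(D, 0)` and remaining vertices `(a, h)` and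
`(c, k)`. -/
noncomputable def kite (D a h c k : ℝ) : Set Plane :=
  convexHull ℝ {pt 0 0, pt D 0, pt a h, pt c k}

lemma kite_comm (D a h c k : ℝ) : kite D a h c k = kite D c k a h := by
  rw [kite, kite, Set.pair_comm (pt a h)]

lemma measurableSet_kite (D a h c k : ℝ) : MeasurableSet (kite D a h c k) :=
  ((Set.toFinite _).isCompact_convexHull (𝕜 := ℝ)).measurableSet

lemma volume_kite_slice_le {D a h c k : ℝ} (ha : a ∈ Set.Icc 0 D) (hc : c ∈ Set.Icc 0 D)
    (hh : h ≠ 0) (hkh : k / h ≤ 0) (y : ℝ) :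
    volume {x | pt x y ∈ kite D a h c k} ≤ ENNReal.ofReal (D * (1 - y / h)) := by
  obtain ⟨ha₀, haD⟩ := ha
  obtain ⟨hc₀, hcD⟩ := hc
  have hleft : ∀ p ∈ kite D a h c k, -1 * p 0 + a / h * p 1 ≤ 0 := by
    have hbot : a / h * k ≤ 0 := by
      rw [div_mul_comm]
      exact mul_nonpos_of_nonpos_of_nonneg hkh ha₀
    apply convexHull_subset_halfPlane
    rintro p (rfl | rfl | rfl | rfl) <;> simp only [pt_apply_zero, pt_apply_one]
    · simp
    · linarith
    · rw [div_mul_cancel₀ a hh]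
      linarith
    · linarith
  have hright : ∀ p ∈ kite D a h c k, 1 * p 0 + (D - a) / h * p 1 ≤ D := by
    have hbot : (D - a) / h * k ≤ 0 := by
      rw [div_mul_comm]
      exact mul_nonpos_of_nonpos_of_nonneg hkh (sub_nonneg.2 haD)
    apply convexHull_subset_halfPlane
    rintro p (rfl | rfl | rfl | rfl) <;> simp only [pt_apply_zero, pt_apply_one]
    · linarith
    · simp
    · rw [div_mul_cancel₀ _ hh]
      linarith
    · linarith
  have hslice : {x | pt x y ∈ kite D a h c k} ⊆ Set.Icc (a / h * y) (D - (D - a) / h * y) :=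
    fun x hx ↦ by
      have hl := hleft _ hx
      have hr := hright _ hx
      simp only [pt_apply_zero, pt_apply_one] at hl hr
      constructor <;> linarith
  calc volume {x | pt x y ∈ kite D a h c k}
      ≤ ENNReal.ofReal (D - (D - a) / h * y - a / h * y) :=
        (measure_mono hslice).trans_eq Real.volume_Icc
    _ = ENNReal.ofReal (D * (1 - y / h)) := by ring_nf

lemma support_volume_kite_slice_subset {D a h c k : ℝ} (ha : a ∈ Set.Icc 0 D)
    (hc : c ∈ Set.Icc 0 D) (hh : 0 < h) (hk : k < 0) :
    (fun y ↦ volume {x | pt x y ∈ kite D a h c k}).support ⊆ Set.Ioc k h := by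
  have hD : 0 ≤ D := ha.1.trans ha.2
  intro y hy
  constructor
  · by_contra! hyk
    refine hy (nonpos_iff_eq_zero.1 ?_)
    rw [kite_comm]
    refine (volume_kite_slice_le hc ha hk.ne (div_nonpos_of_nonneg_of_nonpos hh.le hk.le)
      y).trans_eq (ENNReal.ofReal_of_nonpos ?_)
    exact mul_nonpos_of_nonneg_of_nonpos hD (sub_nonpos.2 ((one_le_div_of_neg hk).2 hyk))
  · by_contra! hhy
    refine hy (nonpos_iff_eq_zero.1 ?_)
    refine (volume_kite_slice_le ha hc hh.ne' (div_nonpos_of_nonpos_of_nonneg hk.le hh.le)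
      y).trans_eq (ENNReal.ofReal_of_nonpos ?_)
    exact mul_nonpos_of_nonneg_of_nonpos hD (sub_nonpos.2 ((one_le_div hh).2 hhy.le))

lemma volume_kite_le {D a h c k : ℝ} (ha : a ∈ Set.Icc 0 D) (hc : c ∈ Set.Icc 0 D)
    (hh : 0 < h) (hk : k < 0) :
    volume (kite D a h c k) ≤ ENNReal.ofReal (D * (h - k) / 2) := by
  have hD : 0 ≤ D := ha.1.trans ha.2
  set w : ℝ → ENNReal := fun y ↦ volume {x | pt x y ∈ kite D a h c k}
  have htop : ∫⁻ y in Set.Ioc 0 h, w y ≤ ENNReal.ofReal ((h - 0) * (D + 0) / 2) := by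
    rw [← setLIntegral_ofReal_lineMap hh hD le_rfl]
    refine lintegral_mono fun y ↦ (volume_kite_slice_le ha hc hh.ne'
      (div_nonpos_of_nonpos_of_nonneg hk.le hh.le) y).trans_eq ?_
    rw [sub_zero, sub_zero, mul_zero, add_zero]
    congr 1
    field_simp
  have hbot : ∫⁻ y in Set.Ioc k 0, w y ≤ ENNReal.ofReal ((0 - k) * (0 + D) / 2) := by
    have hk₀ := hk.ne
    rw [← setLIntegral_ofReal_lineMap hk le_rfl hD]
    simp only [w, kite_comm D a h]
    refine lintegral_mono fun y ↦ (volume_kite_slice_le hc ha hk₀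
      (div_nonpos_of_nonneg_of_nonpos hh.le hk.le) y).trans_eq ?_
    rw [zero_sub, zero_sub, mul_zero, zero_add]
    congr 1
    field_simp
    ring
  calc volume (kite D a h c k)
      = ∫⁻ y in Set.Ioc k h, w y := by
        rw [setLIntegral_eq_of_support_subset (support_volume_kite_slice_subset ha hc hh hk),
          volume_eq_lintegral_horizontal (measurableSet_kite D a h c k)]
    _ = (∫⁻ y in Set.Ioc k 0, w y) + ∫⁻ y in Set.Ioc 0 h, w y := by
        rw [← lintegral_union measurableSet_Ioc (Set.Ioc_disjoint_Ioc_of_le le_rfl),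
          Set.Ioc_union_Ioc_eq_Ioc hk.le hh.le]
    _ ≤ ENNReal.ofReal ((0 - k) * (0 + D) / 2) + ENNReal.ofReal ((h - 0) * (D + 0) / 2) :=
        add_le_add hbot htop
    _ = ENNReal.ofReal (D * (h - k) / 2) := by
        have := neg_pos.2 hk
        rw [← ENNReal.ofReal_add (by nlinarith) (by positivity)]
        ring_nf

end Kite

section SquareDisc

-- The bilinear weights `p q, p (1 - q), (1 - p) q, (1 - p) (1 - q)` with `p + q = 1 + α` and
-- `p - q = β` express the point as a convex combination of the four given ones.
lemma add_smul_add_smul_mem_of_abs_add_abs_le_one {V : Type*} [AddCommGroup V] [Module ℝ V]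
    {S : Set V} (hS : Convex ℝ S) {c u v : V} (hu : c + u ∈ S) (hu' : c - u ∈ S) (hv : c + v ∈ S)
    (hv' : c - v ∈ S) {α β : ℝ} (h : |α| + |β| ≤ 1) : c + (α • u + β • v) ∈ S := by
  have := abs_le.1 ((abs_add_le α β).trans h)
  have := abs_le.1 ((abs_sub α β).trans h)
  set p := (1 + α + β) / 2 with hp
  set q := (1 + α - β) / 2 with hq
  have hpq := hS (hS hu hv (a := q) (b := 1 - q) (by linarith) (by linarith) (by ring))
    (hS hv' hu' (a := q) (b := 1 - q) (by linarith) (by linarith) (by ring))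
    (a := p) (b := 1 - p) (by linarith) (by linarith) (by ring)
  convert hpq using 1
  simp only [hp, hq]
  module

lemma direction_add_pi (θ : ℝ) : direction (θ + π) = -direction θ := by
  apply plane_ext <;> simp [direction]

lemma sqVertex_eq_vec (x y a : ℝ) :
    sqVertex x y a =
      ![pt x y + (√2 / 6) • direction a, pt x y + (√2 / 6) • direction (a + π / 2),
        pt x y - (√2 / 6) • direction a, pt x y - (√2 / 6) • direction (a + π / 2)] := by
  have h₂ : a + 2 * (π / 2) = a + π := by ring
  have h₃ : a + 3 * (π / 2) = a + π / 2 + π := by ring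
  funext k
  fin_cases k <;> simp [sqVertex_eq, h₂, h₃, direction_add_pi, sub_eq_add_neg]

lemma closedBall_subset_convexHull_range_sqVertex (x y a : ℝ) :
    Metric.closedBall (pt x y) (1 / 6) ⊆ convexHull ℝ (Set.range (sqVertex x y a)) := by
  intro p hp
  have h2 : √2 ^ 2 = 2 := Real.sq_sqrt (by norm_num)
  set d : Plane := p - pt x y
  set u : Plane := (√2 / 6) • direction a
  set v : Plane := (√2 / 6) • direction (a + π / 2)
  set α := 3 * √2 * (d 0 * cos a + d 1 * sin a)
  set β := 3 * √2 * (d 1 * cos a - d 0 * sin a)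
  have hαβ : |α| + |β| ≤ 1 := by
    have hsum : α ^ 2 + β ^ 2 ≤ 1 / 2 := calc
      α ^ 2 + β ^ 2 = 18 * (d 0 ^ 2 + d 1 ^ 2) := by
        linear_combination (9 * (d 0 ^ 2 + d 1 ^ 2) * (sin a ^ 2 + cos a ^ 2)) * h2 +
          18 * (d 0 ^ 2 + d 1 ^ 2) * sin_sq_add_cos_sq a
      _ = 18 * dist p (pt x y) ^ 2 := by rw [plane_dist_sq]; rfl
      _ ≤ 18 * (1 / 6) ^ 2 := by gcongr; exact hp
      _ = 1 / 2 := by norm_num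
    refine abs_le_of_sq_le_sq' ?_ zero_le_one |>.2
    nlinarith [sq_nonneg (|α| - |β|), sq_abs α, sq_abs β]
  have hd₀ : d 0 = p 0 - x := rfl
  have hd₁ : d 1 = p 1 - y := rfl
  have hd : p = pt x y + (α • u + β • v) := by
    simp only [u, v, direction, cos_add_pi_div_two, sin_add_pi_div_two, smul_pt, pt_add_pt]
    apply plane_ext <;> simp only [α, β, pt_apply_zero, pt_apply_one]
    · linear_combination (-1 / 2 * d 0 * (sin a ^ 2 + cos a ^ 2)) * h2 -
        d 0 * sin_sq_add_cos_sq a - hd₀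
    · linear_combination (-1 / 2 * d 1 * (sin a ^ 2 + cos a ^ 2)) * h2 -
        d 1 * sin_sq_add_cos_sq a - hd₁
  have hvertex (k : Fin 4) : sqVertex x y a k ∈ convexHull ℝ (Set.range (sqVertex x y a)) :=
    subset_convexHull ℝ _ (Set.mem_range_self k)
  rw [sqVertex_eq_vec] at hvertex ⊢
  rw [hd]
  exact add_smul_add_smul_mem_of_abs_add_abs_le_one (convex_convexHull ℝ _) (hvertex 0) (hvertex 2)
    (hvertex 1) (hvertex 3) hαβ

lemma convexHull_range_sqVertex_subset_closedBall (x y a : ℝ) :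
    convexHull ℝ (Set.range (sqVertex x y a)) ⊆ Metric.closedBall (pt x y) (√2 / 6) :=
  convexHull_min (Set.range_subset_iff.2 fun k ↦ by
    rw [Metric.mem_closedBall, sqVertex_eq, dist_add_smul_direction_self, abs_of_nonneg]
    positivity) (convex_closedBall _ _)

end SquareDisc

section TriangleChord

lemma dist_lineMap_sq_of_dist_eq {V : Type*} [NormedAddCommGroup V] [InnerProductSpace ℝ V]
    {p q r : V} {w : ℝ} (hpq : dist q p = w) (hqr : dist q r = w) (hpr : dist p r = w) (t : ℝ) :
    dist q (AffineMap.lineMap p r t) ^ 2 = w ^ 2 * (1 - t + t ^ 2) := by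
  rw [dist_eq_norm] at *
  have hinner : 2 * inner ℝ (q - p) (q - r) = w ^ 2 := by
    have h := norm_sub_sq_real (q - p) (q - r)
    rw [sub_sub_sub_cancel_left, norm_sub_rev r p, hpq, hqr, hpr] at h
    linarith
  have hsplit : q - AffineMap.lineMap p r t = (1 - t) • (q - p) + t • (q - r) := by
    rw [AffineMap.lineMap_apply_module]
    module
  rw [hsplit, norm_add_sq_real, norm_smul, norm_smul, mul_pow, mul_pow, hpq, hqr,
    real_inner_smul_left, real_inner_smul_right, Real.norm_eq_abs, Real.norm_eq_abs, sq_abs, sq_abs]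
  linear_combination t * (1 - t) * hinner

variable {H : Set Plane} {w : ℝ}

-- The chord joins the middle vertex `q` to the opposite side, hence is at least the altitude.
lemma hasVerticalChord_of_dist_eq (hH : Convex ℝ H) {p q r : Plane} (hp : p ∈ H) (hq : q ∈ H)
    (hr : r ∈ H) (hpq : dist q p = w) (hqr : dist q r = w) (hpr : dist p r = w)
    (hleft : p 0 ≤ q 0) (hright : q 0 ≤ r 0) : HasVerticalChord H (q 0) (√3 / 2 * w) := by
  obtain ⟨t, ht, htq⟩ : q 0 ∈ AffineMap.lineMap (p 0) (r 0) '' Set.Icc (0 : ℝ) 1 := by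
    rw [← segment_eq_image_lineMap, segment_eq_Icc (hleft.trans hright)]
    exact ⟨hleft, hright⟩
  have hz : AffineMap.lineMap p r t ∈ H := hH.lineMap_mem hp hr ht
  have hqz : q 0 = (AffineMap.lineMap p r t : Plane) 0 := by
    rw [← htq]
    simp [AffineMap.lineMap_apply]
  have hw : 0 ≤ w := hpq ▸ dist_nonneg
  refine hasVerticalChord_of_le_dist hH hq hz hqz (by positivity)
    (abs_le_of_sq_le_sq' ?_ dist_nonneg).2
  rw [dist_lineMap_sq_of_dist_eq hpq hqr hpr, mul_pow, div_pow, Real.sq_sqrt zero_le_three]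
  nlinarith [sq_nonneg w, mul_nonneg (sq_nonneg w) (sq_nonneg (t - 1 / 2))]

lemma exists_hasVerticalChord_of_pairwise_dist_eq (hH : Convex ℝ H) {p : Fin 3 → Plane}
    (hp : ∀ k, p k ∈ H) (hw : Pairwise fun j k ↦ dist (p j) (p k) = w) :
    ∃ k, HasVerticalChord H (p k 0) (√3 / 2 * w) := by
  set σ := Tuple.sort fun k ↦ p k 0
  have hσ : Monotone fun k ↦ p (σ k) 0 := Tuple.monotone_sort fun k ↦ p k 0
  have hdist {j k : Fin 3} (hjk : j ≠ k) : dist (p (σ j)) (p (σ k)) = w :=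
    hw (σ.injective.ne hjk)
  exact ⟨σ 1, hasVerticalChord_of_dist_eq hH (hp (σ 0)) (hp (σ 1)) (hp (σ 2)) (hdist (by decide))
    (hdist (by decide)) (hdist (by decide)) (hσ (by decide)) (hσ (by decide))⟩

lemma cos_two_pi_div_three : cos (2 * π / 3) = -1 / 2 := by
  rw [show 2 * π / 3 = π - π / 3 by ring, cos_pi_sub, cos_pi_div_three]
  norm_num

lemma cos_four_pi_div_three : cos (4 * π / 3) = -1 / 2 := by
  rw [show 4 * π / 3 = π / 3 + π by ring, cos_add_pi, cos_pi_div_three]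
  norm_num

lemma pairwise_dist_triVertex (x y b : ℝ) :
    Pairwise fun j k ↦ dist (triVertex x y b j) (triVertex x y b k) = 1 / 2 := by
  intro j k hjk
  have hcos : cos (b + (j : ℕ) * (2 * π / 3) - (b + (k : ℕ) * (2 * π / 3))) = -1 / 2 := by
    have h₂ : 2 * (2 * π / 3) = 4 * π / 3 := by ring
    have h₃ : 2 * π / 3 - 4 * π / 3 = -(2 * π / 3) := by ring
    have h₄ : 4 * π / 3 - 2 * π / 3 = 2 * π / 3 := by ring
    rw [add_sub_add_left_eq_sub]
    fin_cases j <;> fin_cases k <;> first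
      | exact absurd rfl hjk
      | simp [h₂, h₃, h₄, cos_two_pi_div_three, cos_four_pi_div_three]
  have hsq : dist (triVertex x y b j) (triVertex x y b k) ^ 2 = (1 / 2) ^ 2 := by
    rw [triVertex_eq, triVertex_eq, dist_add_smul_direction_sq, hcos, div_pow,
      Real.sq_sqrt zero_le_three]
    norm_num
  exact (sq_eq_sq₀ dist_nonneg (by norm_num)).1 hsq

lemma convexHull_range_triVertex_subset_closedBall (x y b : ℝ) (k : Fin 3) :
    convexHull ℝ (Set.range (triVertex x y b)) ⊆
      Metric.closedBall (triVertex x y b k) (1 / 2) :=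
  convexHull_min (Set.range_subset_iff.2 fun j ↦ by
    rcases eq_or_ne j k with rfl | hjk
    · exact Metric.mem_closedBall_self (by norm_num)
    · exact (pairwise_dist_triVertex x y b hjk).le) (convex_closedBall _ _)

end TriangleChord

section AxisDiameter

/-- A planar convex body with a diameter running along the first coordinate axis from `(0, 0)` to
`(D, 0)`. Of maximality we only record that the body lies in the strip spanned by the diameter. -/
structure HasAxisDiameter (H : Set Plane) (D : ℝ) : Prop where
  convex : Convex ℝ H
  isCompact : IsCompact H
  left_mem : pt 0 0 ∈ H
  right_mem : pt D 0 ∈ H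
  apply_zero_mem : ∀ p ∈ H, p 0 ∈ Set.Icc 0 D

lemma hasAxisDiameter_of_dist_le {H : Set Plane} {D : ℝ} (hH : Convex ℝ H) (hHc : IsCompact H)
    (hleft : pt 0 0 ∈ H) (hright : pt D 0 ∈ H) (hdist : ∀ p ∈ H, ∀ q ∈ H, dist p q ≤ D) :
    HasAxisDiameter H D := by
  refine ⟨hH, hHc, hleft, hright, fun p hp ↦ ?_⟩
  have h₀ := abs_le.1 ((abs_apply_sub_le_dist p _ 0).trans (hdist p hp _ hleft))
  have h₁ := abs_le.1 ((abs_apply_sub_le_dist p _ 0).trans (hdist p hp _ hright))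
  rw [pt_apply_zero] at h₀ h₁
  constructor <;> linarith

lemma exists_forall_dist_le_dist {X : Type*} [PseudoMetricSpace X] {K : Set X} (hK : IsCompact K)
    (hKn : K.Nonempty) : ∃ P ∈ K, ∃ Q ∈ K, ∀ p ∈ K, ∀ q ∈ K, dist p q ≤ dist P Q := by
  obtain ⟨z, hz, hmax⟩ := (hK.prod hK).exists_isMaxOn (hKn.prod hKn) continuous_dist.continuousOn
  exact ⟨z.1, hz.1, z.2, hz.2, fun p hp q hq ↦ isMaxOn_iff.1 hmax (p, q) ⟨hp, hq⟩⟩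

lemma exists_rigidMotion_axis (p q : Plane) :
    ∃ c θ, rigidMotion c θ (pt 0 0) = p ∧ rigidMotion c θ (pt (dist p q) 0) = q := by
  obtain ⟨θ, hθ⟩ := exists_norm_smul_direction (q - p)
  have hleft : rigidMotion p θ (pt 0 0) = p := by
    rw [rigidMotion_apply, planeRotation_apply]
    apply plane_ext <;> simp
  have haxis : pt (dist p q) 0 = pt 0 0 + dist p q • direction 0 := by
    simp [direction, smul_pt, pt_add_pt]
  refine ⟨p, θ, hleft, ?_⟩
  rw [haxis, rigidMotion_add_smul_direction, hleft, zero_add, dist_comm, dist_eq_norm, ← hθ,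
    add_sub_cancel]

lemma exists_rigidMotion_preimage_hasAxisDiameter {K : Set Plane} (hK : Convex ℝ K)
    (hKc : IsCompact K) (hKn : K.Nonempty) :
    ∃ c θ D, HasAxisDiameter (rigidMotion c θ ⁻¹' K) D ∧ ∀ p ∈ K, ∀ q ∈ K, dist p q ≤ D := by
  obtain ⟨P, hP, Q, hQ, hdiam⟩ := exists_forall_dist_le_dist hKc hKn
  obtain ⟨c, θ, hcP, hcQ⟩ := exists_rigidMotion_axis P Q
  have hconv : Convex ℝ (rigidMotion c θ ⁻¹' K) :=
    hK.affine_preimage (rigidMotion c θ).toAffineEquiv.toAffineMap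
  have hcomp : IsCompact (rigidMotion c θ ⁻¹' K) :=
    (rigidMotion c θ).toHomeomorph.isCompact_preimage.2 hKc
  refine ⟨c, θ, dist P Q, hasAxisDiameter_of_dist_le hconv hcomp ?_ ?_ fun p hp q hq ↦ ?_, hdiam⟩
  · rwa [Set.mem_preimage, hcP]
  · rwa [Set.mem_preimage, hcQ]
  · rw [← (rigidMotion c θ).dist_map]
    exact hdiam _ hp _ hq

end AxisDiameter

section Dropping

-- The point of `s` closest to `0` works.
lemma exists_mem_forall_sub_mem_uIcc {s : Set ℝ} (hs : IsCompact s) (hconn : s.OrdConnected)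
    (hne : s.Nonempty) : ∃ t ∈ s, ∀ y ∈ s, y - t ∈ Set.uIcc 0 y := by
  obtain ⟨t, ht, hmin⟩ := hs.exists_isMinOn hne continuous_abs.continuousOn
  refine ⟨t, ht, fun y hy ↦ ?_⟩
  have hty : |t| ≤ |y| := hmin hy
  have hzero (h : (0 : ℝ) ∈ Set.uIcc t y) : t = 0 := by
    simpa using hmin (hconn.uIcc_subset ht hy h)
  rcases le_total 0 y with hy₀ | hy₀
  · have ht₀ : 0 ≤ t := by
      by_contra! h
      exact h.ne (hzero (Set.mem_uIcc_of_le h.le hy₀))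
    rw [abs_of_nonneg ht₀, abs_of_nonneg hy₀] at hty
    exact Set.mem_uIcc_of_le (by linarith) (by linarith)
  · have ht₀ : t ≤ 0 := by
      by_contra! h
      exact h.ne' (hzero (Set.mem_uIcc_of_ge hy₀ h.le))
    rw [abs_of_nonpos ht₀, abs_of_nonpos hy₀] at hty
    exact Set.mem_uIcc_of_ge (by linarith) (by linarith)

variable {H : Set Plane} {D : ℝ}

lemma HasAxisDiameter.axis_mem (hH : HasAxisDiameter H D) {x : ℝ} (hx : x ∈ Set.Icc 0 D) :
    pt x 0 ∈ H := by
  have hseg : pt x 0 ∈ segment ℝ (pt 0 0) (pt D 0) := by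
    rw [← segment_eq_Icc (hx.1.trans hx.2)] at hx
    obtain ⟨s, t, hs, ht, hst, rfl⟩ := hx
    exact ⟨s, t, hs, ht, hst, by simp [smul_pt, pt_add_pt]⟩
  exact hH.convex.segment_subset hH.left_mem hH.right_mem hseg

lemma convexHull_range_const_add {ι V : Type*} [AddCommGroup V] [Module ℝ V] (v : V) (p : ι → V) :
    convexHull ℝ (Set.range fun k ↦ v + p k) = (v + ·) '' convexHull ℝ (Set.range p) := by
  have h := (AffineEquiv.constVAdd ℝ V v).toAffineMap.image_convexHull (Set.range p)
  rw [← Set.range_comp] at h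
  exact h.symm

lemma HasAxisDiameter.exists_drop (hH : HasAxisDiameter H D) {ι : Type*} [Finite ι] [Nonempty ι]
    {p : ι → Plane} (hp : ∀ k, p k ∈ H) :
    ∃ t c, (∀ k, pt 0 t + p k ∈ H) ∧ pt c 0 ∈ convexHull ℝ (Set.range fun k ↦ pt 0 t + p k) := by
  set C := convexHull ℝ (Set.range p)
  have hcomp : IsCompact ((fun q : Plane ↦ q 1) '' C) :=
    ((Set.finite_range p).isCompact_convexHull (𝕜 := ℝ)).image (by fun_prop)
  have hconn : ((fun q : Plane ↦ q 1) '' C).OrdConnected :=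
    ((convex_convexHull ℝ _).is_linear_image ⟨fun _ _ ↦ rfl, fun _ _ ↦ rfl⟩).ordConnected
  obtain ⟨_, ⟨q, hq, rfl⟩, ht⟩ := exists_mem_forall_sub_mem_uIcc hcomp hconn
    ((Set.range_nonempty p).convexHull.image _)
  refine ⟨-q 1, q 0, fun k ↦ ?_, ?_⟩
  · have haxis := hH.axis_mem (hH.apply_zero_mem _ (hp k))
    have hk : pt (p k 0) (p k 1) ∈ H := by
      rw [pt_eta]
      exact hp k
    have hdrop : pt 0 (-q 1) + p k = pt (p k 0) (p k 1 - q 1) := by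
      apply plane_ext <;> simp [sub_eq_neg_add]
    rw [hdrop]
    exact (ordConnected_vertical_slice hH.convex _).uIcc_subset haxis hk
      (ht _ ⟨p k, subset_convexHull ℝ _ (Set.mem_range_self k), rfl⟩)
  · rw [convexHull_range_const_add]
    exact ⟨q, hq, plane_ext (by simp) (by simp)⟩

end Dropping

section AreaBounds

variable {H : Set Plane} {A D : ℝ}

lemma HasAxisDiameter.two_chords_le (hH : HasAxisDiameter H D) (hA : 0 ≤ A)
    (hvol : volume H ≤ ENNReal.ofReal A) {p q : Plane} {ℓ₁ ℓ₂ : ℝ} (hp : p ∈ H) (hq : q ∈ H)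
    (hpq : p 0 ≤ q 0) (hℓ₁ : 0 ≤ ℓ₁) (hℓ₂ : 0 ≤ ℓ₂) (h₁ : HasVerticalChord H (p 0) ℓ₁)
    (h₂ : HasVerticalChord H (q 0) ℓ₂) : q 0 * ℓ₁ + (D - p 0) * ℓ₂ ≤ 2 * A := by
  have h := (volume_ge_of_two_chords hH.convex hH.isCompact.measurableSet hH.left_mem hH.right_mem
    (hH.apply_zero_mem p hp).1 hpq (hH.apply_zero_mem q hq).2 hℓ₁ hℓ₂ h₁ h₂).trans hvol
  linarith [(ENNReal.ofReal_le_ofReal_iff hA).1 h]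

lemma HasAxisDiameter.mul_chord_le (hH : HasAxisDiameter H D) (hA : 0 ≤ A)
    (hvol : volume H ≤ ENNReal.ofReal A) {p : Plane} {ℓ : ℝ} (hp : p ∈ H) (hℓ : 0 ≤ ℓ)
    (h : HasVerticalChord H (p 0) ℓ) : D * ℓ ≤ 2 * A := by
  linarith [hH.two_chords_le hA hvol hp hp le_rfl hℓ hℓ h h]

lemma HasAxisDiameter.mul_abs_apply_one_le (hH : HasAxisDiameter H D) (hA : 0 ≤ A)
    (hvol : volume H ≤ ENNReal.ofReal A) {p : Plane} (hp : p ∈ H) : D * |p 1| ≤ 2 * A := by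
  have hfoot : pt (p 0) 0 ∈ H := hH.axis_mem (hH.apply_zero_mem p hp)
  refine hH.mul_chord_le hA hvol hp (abs_nonneg _)
    (hasVerticalChord_of_le_dist hH.convex hp hfoot rfl (abs_nonneg _) ?_)
  simpa using abs_apply_sub_le_dist p (pt (p 0) 0) 1

lemma hasVerticalChord_of_sqVertex_mem (hH : Convex ℝ H) {x y a : ℝ}
    (hS : ∀ k, sqVertex x y a k ∈ H) : HasVerticalChord H x (1 / 3) := by
  have hball : Metric.closedBall (pt x y) (1 / 6) ⊆ H :=
    (closedBall_subset_convexHull_range_sqVertex x y a).trans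
      (convexHull_min (Set.range_subset_iff.2 hS) hH)
  have hmem (s : ℝ) (hs : |s| = 1 / 6) : pt x (y + s) ∈ H := by
    refine hball (Metric.mem_closedBall.2 (abs_le_of_sq_le_sq' ?_ (by norm_num)).2)
    rw [plane_dist_sq, pt_apply_zero, pt_apply_one, pt_apply_zero, pt_apply_one, ← hs, sq_abs]
    exact le_of_eq (by ring)
  refine ⟨y + -(1 / 6), hmem _ (by norm_num), ?_⟩
  rw [add_assoc]
  exact hmem _ (by norm_num)

lemma exists_hasVerticalChord_of_triVertex_mem (hH : Convex ℝ H) {x y b : ℝ}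
    (hT : ∀ k, triVertex x y b k ∈ H) :
    ∃ k, HasVerticalChord H (triVertex x y b k 0) (√3 / 4) := by
  obtain ⟨k, hk⟩ :=
    exists_hasVerticalChord_of_pairwise_dist_eq hH hT (pairwise_dist_triVertex x y b)
  exact ⟨k, by convert hk using 1; ring⟩

end AreaBounds

section Reduction

variable {H : Set Plane} {D x₁ y₁ a x₂ y₂ b : ℝ}

lemma HasAxisDiameter.le_of_triVertex_mem (hH : HasAxisDiameter H D)
    (hvol : volume H ≤ ENNReal.ofReal 0.23) (hT : ∀ k, triVertex x₂ y₂ b k ∈ H) : D ≤ 3 / 2 := by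
  obtain ⟨k, hk⟩ := exists_hasVerticalChord_of_triVertex_mem hH.convex hT
  have := hH.mul_chord_le (by norm_num) hvol (hT k) (by positivity) hk
  have h3 : 1.7 ≤ √3 := le_sqrt_of_sq_le (by norm_num)
  by_contra! hD
  nlinarith

-- If the two contact points were further apart, the chord of length `1 / 3` of the square and the
-- chord of length `√3 / 4` of the triangle would be so far apart that the hexagon they span
-- together with the diameter exceeds the area bound.
lemma HasAxisDiameter.abs_sub_le_one (hH : HasAxisDiameter H D)
    (hvol : volume H ≤ ENNReal.ofReal 0.23) (hS : ∀ k, sqVertex x₁ y₁ a k ∈ H)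
    (hT : ∀ k, triVertex x₂ y₂ b k ∈ H) {c d : ℝ}
    (hc : pt c 0 ∈ convexHull ℝ (Set.range (sqVertex x₁ y₁ a)))
    (hd : pt d 0 ∈ convexHull ℝ (Set.range (triVertex x₂ y₂ b))) : |c - d| ≤ 1 := by
  have hSH := convexHull_min (Set.range_subset_iff.2 hS) hH.convex
  have hTH := convexHull_min (Set.range_subset_iff.2 hT) hH.convex
  obtain ⟨hc₀, hcD⟩ := hH.apply_zero_mem _ (hSH hc)
  obtain ⟨hd₀, hdD⟩ := hH.apply_zero_mem _ (hTH hd)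
  rw [pt_apply_zero] at hc₀ hcD hd₀ hdD
  have hcentre : pt x₁ y₁ ∈ H := hSH (closedBall_subset_convexHull_range_sqVertex x₁ y₁ a
    (Metric.mem_closedBall_self (by norm_num)))
  have hsq : HasVerticalChord H x₁ (1 / 3) := hasVerticalChord_of_sqVertex_mem hH.convex hS
  obtain ⟨k, htri⟩ := exists_hasVerticalChord_of_triVertex_mem hH.convex hT
  have hcx := abs_le.1 ((abs_apply_sub_le_dist _ _ 0).trans
    (convexHull_range_sqVertex_subset_closedBall x₁ y₁ a hc))
  have hdX := abs_le.1 ((abs_apply_sub_le_dist _ _ 0).trans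
    (convexHull_range_triVertex_subset_closedBall x₂ y₂ b k hd))
  rw [pt_apply_zero, pt_apply_zero] at hcx
  rw [pt_apply_zero] at hdX
  have h2 : √2 ≤ 3 / 2 := sqrt_le_iff.2 (by norm_num)
  have h3 : 1.7 ≤ √3 := le_sqrt_of_sq_le (by norm_num)
  by_contra! hcd
  rcases lt_abs.1 hcd with hcd | hcd
  · have := hH.two_chords_le (by norm_num) hvol (hT k) hcentre
      (by rw [pt_apply_zero]; linarith) (by positivity) (by norm_num) htri hsq
    rw [pt_apply_zero] at this
    nlinarith
  · have := hH.two_chords_le (by norm_num) hvol hcentre (hT k)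
      (by rw [pt_apply_zero]; linarith) (by norm_num) (by positivity) hsq htri
    rw [pt_apply_zero] at this
    nlinarith

lemma mem_segEF {x : ℝ} (hx : x ∈ Set.Icc 0 1) : pt x 0 ∈ segEF :=
  ⟨1 - x, x, sub_nonneg.2 hx.2, hx.1, sub_add_cancel 1 x, by simp [smul_pt, pt_add_pt]⟩

lemma infDist_segEF_le_one {p : Plane} (h₀ : p 0 ∈ Set.Icc (-1 / 2) (3 / 2)) (h₁ : |p 1| ≤ 1 / 2) :
    Metric.infDist p segEF ≤ 1 := by
  obtain ⟨hl, hr⟩ := h₀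
  have hx : |p 0 - max 0 (min 1 (p 0))| ≤ 1 / 2 := by
    rcases max_cases 0 (min 1 (p 0)) with ⟨h, _⟩ | ⟨h, _⟩ <;>
      rcases min_cases 1 (p 0) with ⟨h', _⟩ | ⟨h', _⟩ <;>
      exact abs_le.2 ⟨by linarith, by linarith⟩
  have hmem : pt (max 0 (min 1 (p 0))) 0 ∈ segEF :=
    mem_segEF ⟨le_max_left _ _, max_le zero_le_one (min_le_left _ _)⟩
  refine (Metric.infDist_le_dist_of_mem hmem).trans (abs_le_of_sq_le_sq' ?_ zero_le_one).2
  rw [plane_dist_sq, pt_apply_zero, pt_apply_one, sub_zero]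
  linarith [sq_le_sq' (abs_le.1 hx).1 (abs_le.1 hx).2, sq_le_sq' (abs_le.1 h₁).1 (abs_le.1 h₁).2]

lemma HasAxisDiameter.infDist_shift_le_one (hH : HasAxisDiameter H D) (hD : D ≤ 3 / 2)
    (hh : ∀ p ∈ H, |p 1| ≤ 0.46) {s : ℝ} (hs : s ∈ Set.Icc 0 (D - 1)) {p : Plane} (hp : p ∈ H) :
    Metric.infDist (pt (-s) 0 + p) segEF ≤ 1 ∧
      (pt (-s) 0 + p) 1 ∈ Set.Icc (-0.46 : ℝ) 0.46 := by
  obtain ⟨hp₀, hpD⟩ := hH.apply_zero_mem p hp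
  have h₀ : (pt (-s) 0 + p) 0 = -s + p 0 := rfl
  have h₁ : (pt (-s) 0 + p) 1 = p 1 := zero_add _
  have hp₁ := hh p hp
  rw [Set.mem_Icc, ← abs_le, h₁]
  refine ⟨infDist_segEF_le_one ?_ ?_, hp₁⟩
  · rw [h₀]
    constructor <;> linarith [hs.1, hs.2]
  · rw [h₁]
    linarith

lemma exists_neg_add_mem_Icc {c d : ℝ} (hD : 1 ≤ D) (hc : c ∈ Set.Icc 0 D) (hd : d ∈ Set.Icc 0 D)
    (hcd : |c - d| ≤ 1) :
    ∃ s ∈ Set.Icc 0 (D - 1), -s + c ∈ Set.Icc 0 1 ∧ -s + d ∈ Set.Icc 0 1 := by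
  wlog h : c ≤ d generalizing c d
  · obtain ⟨s, hs, hsd, hsc⟩ := this hd hc (abs_sub_comm c d ▸ hcd) (le_of_not_ge h)
    exact ⟨s, hs, hsc, hsd⟩
  have := abs_le.1 hcd
  refine ⟨min c (D - 1), ⟨le_min hc.1 (sub_nonneg.2 hD), min_le_right _ _⟩, ?_⟩
  rcases min_cases c (D - 1) with ⟨hs, _⟩ | ⟨hs, _⟩ <;> rw [hs] <;>
    exact ⟨⟨by linarith, by linarith [hc.2]⟩, ⟨by linarith, by linarith [hd.2]⟩⟩

lemma HasAxisDiameter.exists_shift (hH : HasAxisDiameter H D) (hD : D ∈ Set.Icc 1 (3 / 2))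
    (hh : ∀ p ∈ H, |p 1| ≤ 0.46) (hS : ∀ k, sqVertex x₁ y₁ a k ∈ H)
    (hT : ∀ k, triVertex x₂ y₂ b k ∈ H) {c d : ℝ} (hcd : |c - d| ≤ 1)
    (hc : pt c 0 ∈ convexHull ℝ (Set.range (sqVertex x₁ y₁ a)))
    (hd : pt d 0 ∈ convexHull ℝ (Set.range (triVertex x₂ y₂ b))) :
    ∃ s, K2 (-s + x₁) y₁ a (-s + x₂) y₂ b ∧
      config (-s + x₁) y₁ a (-s + x₂) y₂ b ⊆ (pt (-s) 0 + ·) '' H := by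
  have hSH := convexHull_min (Set.range_subset_iff.2 hS) hH.convex
  have hTH := convexHull_min (Set.range_subset_iff.2 hT) hH.convex
  obtain ⟨s, hs, hcs, hds⟩ := exists_neg_add_mem_Icc hD.1 (hH.apply_zero_mem _ (hSH hc))
    (hH.apply_zero_mem _ (hTH hd)) hcd
  rw [pt_apply_zero] at hcs hds
  have hS' : sqVertex (-s + x₁) y₁ a = fun k ↦ pt (-s) 0 + sqVertex x₁ y₁ a k := by
    simp only [pt_add_sqVertex, zero_add]
  have hT' : triVertex (-s + x₂) y₂ b = fun k ↦ pt (-s) 0 + triVertex x₂ y₂ b k := by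
    simp only [pt_add_triVertex, zero_add]
  refine ⟨s, ⟨?_, ?_, ?_⟩, ?_⟩
  · rw [hS', hT', convexHull_range_const_add, convexHull_range_const_add, ← Set.image_union]
    rintro _ ⟨p, hp, rfl⟩
    exact hH.infDist_shift_le_one hD.2 hh hs (Set.union_subset hSH hTH hp)
  · rw [hS', convexHull_range_const_add]
    exact ⟨_, ⟨_, hc, rfl⟩, by simpa only [pt_add_pt, add_zero] using mem_segEF hcs⟩
  · rw [hT', convexHull_range_const_add]
    exact ⟨_, ⟨_, hd, rfl⟩, by simpa only [pt_add_pt, add_zero] using mem_segEF hds⟩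
  · rw [config, hS', hT']
    have haxis {x : ℝ} (hx : s + x ∈ Set.Icc 0 D) : pt x 0 ∈ (pt (-s) 0 + ·) '' H :=
      ⟨pt (s + x) 0, hH.axis_mem hx, by simp [pt_add_pt]⟩
    refine Set.union_subset (Set.union_subset (Set.pair_subset (haxis ?_) (haxis ?_)) ?_) ?_
    · constructor <;> linarith [hs.1, hs.2, hD.1]
    · constructor <;> linarith [hs.1, hs.2, hD.1]
    · exact Set.range_subset_iff.2 fun k ↦ ⟨_, hS k, rfl⟩
    · exact Set.range_subset_iff.2 fun k ↦ ⟨_, hT k, rfl⟩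

lemma isCompact_convexHull_config (x₁ y₁ a x₂ y₂ b : ℝ) :
    IsCompact (convexHull ℝ (config x₁ y₁ a x₂ y₂ b)) :=
  (((Set.toFinite _).union (Set.finite_range _)).union (Set.finite_range _)).isCompact_convexHull
    (𝕜 := ℝ)

lemma HasAxisDiameter.exists_K2_area_le (hH : HasAxisDiameter H D) (hD : 1 ≤ D)
    (hvol : volume H ≤ ENNReal.ofReal 0.23) (hS : ∀ k, sqVertex x₁ y₁ a k ∈ H)
    (hT : ∀ k, triVertex x₂ y₂ b k ∈ H) :
    ∃ x₁' y₁' x₂' y₂', K2 x₁' y₁' a x₂' y₂' b ∧ area x₁' y₁' a x₂' y₂' b ≤ (volume H).toReal := by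
  have hD' : D ≤ 3 / 2 := hH.le_of_triVertex_mem hvol hT
  have hh : ∀ p ∈ H, |p 1| ≤ 0.46 := fun p hp ↦ by
    have := hH.mul_abs_apply_one_le (by norm_num) hvol hp
    nlinarith [abs_nonneg (p 1)]
  obtain ⟨t₁, c, hS', hc⟩ := hH.exists_drop hS
  obtain ⟨t₂, d, hT', hd⟩ := hH.exists_drop hT
  simp only [pt_add_sqVertex, pt_add_triVertex] at hS' hc hT' hd
  have hcd : |c - d| ≤ 1 := hH.abs_sub_le_one hvol hS' hT' hc hd
  obtain ⟨s, hK2, hconfig⟩ := hH.exists_shift ⟨hD, hD'⟩ hh hS' hT' hcd hc hd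
  have hhull := convexHull_min hconfig (hH.convex.translate (pt (-s) 0))
  refine ⟨_, _, _, _, hK2, ENNReal.toReal_mono hH.isCompact.measure_lt_top.ne ?_⟩
  calc volume (convexHull ℝ (config (-s + (0 + x₁)) (t₁ + y₁) a (-s + (0 + x₂)) (t₂ + y₂) b))
      ≤ volume ((pt (-s) 0 + ·) '' H) := measure_mono hhull
    _ = volume H := by rw [Set.image_add_left, measure_preimage_add]

lemma exists_K2_area_le (h : area x₁ y₁ a x₂ y₂ b ≤ 0.23) :
    ∃ x₁' y₁' a' x₂' y₂' b', K2 x₁' y₁' a' x₂' y₂' b' ∧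
      area x₁' y₁' a' x₂' y₂' b' ≤ area x₁ y₁ a x₂ y₂ b := by
  set K := convexHull ℝ (config x₁ y₁ a x₂ y₂ b)
  have hKc : IsCompact K := isCompact_convexHull_config x₁ y₁ a x₂ y₂ b
  have hsub : config x₁ y₁ a x₂ y₂ b ⊆ K := subset_convexHull ℝ _
  have hE : pt 0 0 ∈ K := hsub (by simp [config])
  have hF : pt 1 0 ∈ K := hsub (by simp [config])
  obtain ⟨c, θ, D, hH, hdiam⟩ :=
    exists_rigidMotion_preimage_hasAxisDiameter (convex_convexHull ℝ _) hKc ⟨_, hE⟩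
  have hvol : volume (rigidMotion c θ ⁻¹' K) = volume K :=
    (measurePreserving_rigidMotion c θ).measure_preimage hKc.measurableSet.nullMeasurableSet
  have hD : 1 ≤ D := by
    simpa using (abs_apply_sub_le_dist (pt 0 0) (pt 1 0) 0).trans (hdiam _ hE _ hF)
  have hpull (p : Plane) : ∃ u v, rigidMotion c θ (pt u v) = p :=
    ⟨(rigidMotion c θ).symm p 0, (rigidMotion c θ).symm p 1, by rw [pt_eta]; simp⟩
  obtain ⟨u₁, v₁, h₁⟩ := hpull (pt x₁ y₁)
  obtain ⟨u₂, v₂, h₂⟩ := hpull (pt x₂ y₂)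
  have hS (k : Fin 4) : sqVertex u₁ v₁ (a - θ) k ∈ rigidMotion c θ ⁻¹' K := by
    rw [Set.mem_preimage, rigidMotion_sqVertex h₁, sub_add_cancel]
    exact hsub (by simp [config])
  have hT (k : Fin 3) : triVertex u₂ v₂ (b - θ) k ∈ rigidMotion c θ ⁻¹' K := by
    rw [Set.mem_preimage, rigidMotion_triVertex h₂, sub_add_cancel]
    exact hsub (by simp [config])
  have hle : volume (rigidMotion c θ ⁻¹' K) ≤ ENNReal.ofReal 0.23 :=
    hvol.trans_le ((ENNReal.le_ofReal_iff_toReal_le hKc.measure_lt_top.ne (by norm_num)).2 h)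
  obtain ⟨x₁', y₁', x₂', y₂', hK2, harea⟩ := hH.exists_K2_area_le hD hle hS hT
  exact ⟨x₁', y₁', _, x₂', y₂', _, hK2, harea.trans_eq (congrArg ENNReal.toReal hvol)⟩

end Reduction

section Witness

lemma sqVertex_witness :
    sqVertex (5 / 6 - √3 / 12) (√3 / 6 - 1 / 12) (π / 4 + π / 6) =
      ![pt (3 / 4) (√3 / 4), pt (3 / 4 - √3 / 6) (√3 / 4 - 1 / 6),
        pt (11 / 12 - √3 / 6) (√3 / 12 - 1 / 6), pt (11 / 12) (√3 / 12)] := by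
  have h2 : √2 * √2 = 2 := mul_self_sqrt zero_le_two
  have hcos : √2 / 6 * cos (π / 4 + π / 6) = (√3 - 1) / 12 := by
    rw [cos_add, cos_pi_div_four, cos_pi_div_six, sin_pi_div_four, sin_pi_div_six]
    linear_combination (√3 - 1) / 24 * h2
  have hsin : √2 / 6 * sin (π / 4 + π / 6) = (√3 + 1) / 12 := by
    rw [sin_add, cos_pi_div_four, cos_pi_div_six, sin_pi_div_four, sin_pi_div_six]
    linear_combination (√3 + 1) / 24 * h2
  have hu : (√2 / 6) • direction (π / 4 + π / 6) = pt ((√3 - 1) / 12) ((√3 + 1) / 12) := by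
    rw [direction, smul_pt, hcos, hsin]
  have hv : (√2 / 6) • direction (π / 4 + π / 6 + π / 2) =
      pt (-((√3 + 1) / 12)) ((√3 - 1) / 12) := by
    rw [direction, smul_pt, cos_add_pi_div_two, sin_add_pi_div_two, mul_neg, hcos, hsin]
  rw [sqVertex_eq_vec, hu, hv]
  congr! 4 <;> apply plane_ext <;> simp <;> ring

lemma triVertex_witness :
    triVertex (3 / 4) (√3 / 12) (π / 2) = ![pt (3 / 4) (√3 / 4), pt (1 / 2) 0, pt 1 0] := by
  have h3 : √3 * √3 = 3 := mul_self_sqrt zero_le_three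
  have hsin : sin (2 * π / 3) = √3 / 2 := by
    rw [show 2 * π / 3 = π - π / 3 by ring, sin_pi_sub, sin_pi_div_three]
  have hsin' : sin (4 * π / 3) = -(√3 / 2) := by
    rw [show 4 * π / 3 = π / 3 + π by ring, sin_add_pi, sin_pi_div_three]
  have htwo : 2 * (2 * π / 3) = 4 * π / 3 := by ring
  funext k
  fin_cases k <;> apply plane_ext <;>
    simp [triVertex, htwo, cos_add, sin_add, hsin, hsin', cos_two_pi_div_three,
      cos_four_pi_div_three] <;> linarith

-- The square and the triangle share their top vertex, the two adjacent vertices of the square lie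
-- on the segments joining it to `E` and `F`, and the opposite one is the bottom of the kite.
lemma config_witness_subset :
    config (5 / 6 - √3 / 12) (√3 / 6 - 1 / 12) (π / 4 + π / 6) (3 / 4) (√3 / 12) (π / 2) ⊆
      kite 1 (3 / 4) (√3 / 4) (11 / 12 - √3 / 6) (√3 / 12 - 1 / 6) := by
  set K := kite 1 (3 / 4) (√3 / 4) (11 / 12 - √3 / 6) (√3 / 12 - 1 / 6)
  have hK : Convex ℝ K := convex_convexHull ℝ _
  have hE : pt 0 0 ∈ K := subset_convexHull ℝ _ (by simp)
  have hF : pt 1 0 ∈ K := subset_convexHull ℝ _ (by simp)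
  have htop : pt (3 / 4) (√3 / 4) ∈ K := subset_convexHull ℝ _ (by simp)
  have hbot : pt (11 / 12 - √3 / 6) (√3 / 12 - 1 / 6) ∈ K := subset_convexHull ℝ _ (by simp)
  have h3 : √3 * √3 = 3 := mul_self_sqrt zero_le_three
  have hleft : pt (3 / 4 - √3 / 6) (√3 / 4 - 1 / 6) ∈ K := by
    have hu : √3 ≤ 2 := sqrt_le_iff.2 (by norm_num)
    convert hK hE htop (a := 2 * √3 / 9) (b := 1 - 2 * √3 / 9) (by positivity) (by linarith)
      (by ring) using 1
    apply plane_ext <;> simp [smul_pt, pt_add_pt] <;> linarith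
  have hright : pt (11 / 12) (√3 / 12) ∈ K := by
    convert hK hF htop (a := 2 / 3) (b := 1 / 3) (by norm_num) (by norm_num) (by norm_num) using 1
    apply plane_ext <;> simp [smul_pt, pt_add_pt] <;> ring
  have hmid : pt (1 / 2) 0 ∈ K := by
    convert hK hE hF (a := 1 / 2) (b := 1 / 2) (by norm_num) (by norm_num) (by norm_num) using 1
    simp [smul_pt, pt_add_pt]
  rw [config, sqVertex_witness, triVertex_witness]
  refine Set.union_subset (Set.union_subset (Set.pair_subset hE hF) ?_) ?_ <;>
    refine Set.range_subset_iff.2 fun k ↦ ?_ <;> fin_cases k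
  exacts [htop, hleft, hbot, hright, htop, hmid, hF]

lemma area_witness_le :
    area (5 / 6 - √3 / 12) (√3 / 6 - 1 / 12) (π / 4 + π / 6) (3 / 4) (√3 / 12) (π / 2) ≤ 0.23 := by
  have hl : 1.7 ≤ √3 := le_sqrt_of_sq_le (by norm_num)
  have hu : √3 ≤ 1.76 := sqrt_le_iff.2 (by norm_num)
  have hkite := volume_kite_le (D := 1) (a := 3 / 4) (h := √3 / 4) (c := 11 / 12 - √3 / 6)
    (k := √3 / 12 - 1 / 6) ⟨by norm_num, by norm_num⟩ ⟨by linarith, by linarith⟩ (by positivity)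
    (by linarith)
  refine ENNReal.toReal_le_of_le_ofReal (by norm_num) <|
    (measure_mono (convexHull_min config_witness_subset (convex_convexHull ℝ _))).trans <|
    hkite.trans <| ENNReal.ofReal_le_ofReal (by linarith)

end Witness

section LowerSemicontinuity

variable {E : Type*} [NormedAddCommGroup E] [NormedSpace ℝ E]

lemma thickening_subset_image_homothety {K : Set E} (hK : Convex ℝ K) {c : E} {r ε : ℝ}
    (hr : 0 < r) (hball : Metric.closedBall c r ⊆ K) (hε : 0 < ε) :
    Metric.thickening ε K ⊆ AffineMap.homothety c (1 + ε / r) '' K := by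
  intro p hp
  obtain ⟨q, hq, hpq⟩ := Metric.mem_thickening_iff.1 hp
  have hb : c + (r / ε) • (p - q) ∈ K := by
    refine hball ?_
    rw [mem_closedBall_iff_norm, add_sub_cancel_left, norm_smul,
      Real.norm_of_nonneg (by positivity), ← dist_eq_norm, div_mul_eq_mul_div, div_le_iff₀ hε]
    gcongr
  refine ⟨(r / (r + ε)) • q + (ε / (r + ε)) • (c + (r / ε) • (p - q)),
    hK hq hb (by positivity) (by positivity) (by field_simp), ?_⟩
  rw [AffineMap.homothety_apply, vsub_eq_sub, vadd_eq_add]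
  match_scalars <;> field_simp <;> ring

variable [FiniteDimensional ℝ E] [MeasurableSpace E] [BorelSpace E]
  (μ : Measure E) [μ.IsAddHaarMeasure]

lemma measure_convexHull_le_of_subset_thickening {A K : Set E} (hK : Convex ℝ K) {c : E} {r ε : ℝ}
    (hr : 0 < r) (hball : Metric.closedBall c r ⊆ K) (hε : 0 < ε) (hA : A ⊆ Metric.thickening ε K) :
    μ (convexHull ℝ A) ≤ ENNReal.ofReal ((1 + ε / r) ^ Module.finrank ℝ E) * μ K := by
  have hsub : convexHull ℝ A ⊆ AffineMap.homothety c (1 + ε / r) '' K :=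
    convexHull_min (hA.trans (thickening_subset_image_homothety hK hr hball hε))
      (hK.affine_image _)
  calc μ (convexHull ℝ A) ≤ μ (AffineMap.homothety c (1 + ε / r) '' K) := measure_mono hsub
    _ = _ := by rw [Measure.addHaar_image_homothety, abs_of_nonneg (by positivity)]

lemma lowerSemicontinuous_measureReal_convexHull_range {X ι : Type*} [TopologicalSpace X] [Finite ι]
    {f : X → ι → E} (hf : Continuous f) {c : X → E} {r : ℝ} (hr : 0 < r)
    (hball : ∀ x, Metric.closedBall (c x) r ⊆ convexHull ℝ (Set.range (f x))) :
    LowerSemicontinuous fun x ↦ μ.real (convexHull ℝ (Set.range (f x))) := by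
  intro x y hy
  have hlim : Filter.Tendsto (fun ε ↦ (1 + ε / r) ^ Module.finrank ℝ E * y)
      (nhdsWithin 0 (Set.Ioi 0)) (nhds y) := by
    have : Continuous fun ε ↦ (1 + ε / r) ^ Module.finrank ℝ E * y := by fun_prop
    simpa using (this.tendsto 0).mono_left nhdsWithin_le_nhds
  obtain ⟨ε, hεy, hε : 0 < ε⟩ := ((hlim.eventually_lt_const hy).and self_mem_nhdsWithin).exists
  have hnear : ∀ᶠ w in nhds x, ∀ i, dist (f x i) (f w i) < ε := Filter.eventually_all.2 fun i ↦ by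
    simpa only [dist_comm (f x i)] using
      (tendsto_pi_nhds.1 (hf.tendsto x) i).eventually (Metric.ball_mem_nhds _ hε)
  filter_upwards [hnear] with w hw
  have hsub : Set.range (f x) ⊆ Metric.thickening ε (convexHull ℝ (Set.range (f w))) :=
    Set.range_subset_iff.2 fun i ↦ Metric.mem_thickening_iff.2
      ⟨f w i, subset_convexHull ℝ _ ⟨i, rfl⟩, hw i⟩
  have hfin : μ (convexHull ℝ (Set.range (f w))) ≠ ⊤ :=
    ((Set.finite_range _).isCompact_convexHull (𝕜 := ℝ)).measure_lt_top.ne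
  have hle := ENNReal.toReal_mono (ENNReal.mul_ne_top ENNReal.ofReal_ne_top hfin)
    (measure_convexHull_le_of_subset_thickening μ (convex_convexHull ℝ _) hr (hball w) hε hsub)
  rw [ENNReal.toReal_mul, ENNReal.toReal_ofReal (by positivity)] at hle
  exact lt_of_mul_lt_mul_left (hεy.trans_le hle) (by positivity)

lemma config_eq_range (x₁ y₁ a x₂ y₂ b : ℝ) : config x₁ y₁ a x₂ y₂ b =
    Set.range (Sum.elim (Sum.elim ![pt 0 0, pt 1 0] (sqVertex x₁ y₁ a)) (triVertex x₂ y₂ b)) := by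
  rw [Set.Sum.elim_range, Set.Sum.elim_range, config, Matrix.range_cons,
    Matrix.range_cons_empty, Set.singleton_union]

lemma lowerSemicontinuous_area : LowerSemicontinuous fun v : ℝ × ℝ × ℝ × ℝ × ℝ × ℝ ↦
    area v.1 v.2.1 v.2.2.1 v.2.2.2.1 v.2.2.2.2.1 v.2.2.2.2.2 := by
  simp only [area, config_eq_range]
  refine lowerSemicontinuous_measureReal_convexHull_range volume (r := 1 / 6)
    (c := fun v ↦ pt v.1 v.2.1) ?_ (by norm_num) fun v ↦ ?_
  · refine continuous_pi ?_
    rintro ((i | k) | k)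
    · exact continuous_const
    · exact continuous_pt (by fun_prop) (by fun_prop)
    · exact continuous_pt (by fun_prop) (by fun_prop)
  · refine (closedBall_subset_convexHull_range_sqVertex v.1 v.2.1 v.2.2.1).trans
      (convexHull_mono ?_)
    rintro _ ⟨k, rfl⟩
    exact ⟨Sum.inl (Sum.inr k), rfl⟩

end LowerSemicontinuity

section Compactness

lemma sqVertex_periodic (x y : ℝ) : Function.Periodic (sqVertex x y) (2 * π) := fun a ↦ by
  ext1 k
  simp only [sqVertex, add_right_comm a, cos_add_two_pi, sin_add_two_pi]

lemma triVertex_periodic (x y : ℝ) : Function.Periodic (triVertex x y) (2 * π) := fun b ↦ by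
  ext1 k
  rw [triVertex_eq, triVertex_eq, direction, direction, add_right_comm, cos_add_two_pi,
    sin_add_two_pi]

lemma dist_origin_le_of_infDist_segEF_le {p : Plane} {r : ℝ} (h : Metric.infDist p segEF ≤ r) :
    dist p (pt 0 0) ≤ r + 1 := by
  have hseg : segEF ⊆ Metric.closedBall (pt 0 0) 1 :=
    (convex_closedBall _ _).segment_subset (Metric.mem_closedBall_self zero_le_one) <|
      Metric.mem_closedBall.2 (abs_le_of_sq_le_sq' (by simp [plane_dist_sq]) zero_le_one).2
  have hcompact : IsCompact segEF := by
    rw [segEF, ← convexHull_pair]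
    exact (Set.toFinite _).isCompact_convexHull (𝕜 := ℝ)
  obtain ⟨q, hq, hpq⟩ := hcompact.exists_infDist_eq_dist ⟨_, left_mem_segment ℝ _ _⟩ p
  linarith [dist_triangle p q (pt 0 0), Metric.mem_closedBall.1 (hseg hq)]

lemma mem_Icc_of_infDist_vertex_le {x y φ ρ : ℝ} (hρ : |ρ| ≤ 1)
    (h : Metric.infDist (pt x y + ρ • direction φ) segEF ≤ 1) :
    x ∈ Set.Icc (-3) 3 ∧ y ∈ Set.Icc (-3) 3 := by
  have hdist : dist (pt x y) (pt 0 0) ≤ 3 := by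
    have := dist_origin_le_of_infDist_segEF_le h
    linarith [dist_triangle_left (pt x y) (pt 0 0) (pt x y + ρ • direction φ),
      dist_add_smul_direction_self (pt x y) ρ φ]
  constructor <;> refine abs_le.1 ?_
  · simpa using (abs_apply_sub_le_dist _ _ 0).trans hdist
  · simpa using (abs_apply_sub_le_dist _ _ 1).trans hdist

/-- A compact set of parameters that contains, up to full turns of the square and the triangle,
every configuration satisfying `K2`. -/
def paramBox : Set (ℝ × ℝ × ℝ × ℝ × ℝ × ℝ) :=
  Set.Icc (-3) 3 ×ˢ Set.Icc (-3) 3 ×ˢ Set.Icc 0 (2 * π) ×ˢ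
    Set.Icc (-3) 3 ×ˢ Set.Icc (-3) 3 ×ˢ Set.Icc 0 (2 * π)

lemma isCompact_paramBox : IsCompact paramBox :=
  isCompact_Icc.prod <| isCompact_Icc.prod <| isCompact_Icc.prod <|
    isCompact_Icc.prod <| isCompact_Icc.prod isCompact_Icc

lemma K2.exists_mem_paramBox {x₁ y₁ a x₂ y₂ b : ℝ} (h : K2 x₁ y₁ a x₂ y₂ b) :
    ∃ a' b', (x₁, y₁, a', x₂, y₂, b') ∈ paramBox ∧ K2 x₁ y₁ a' x₂ y₂ b' ∧
      area x₁ y₁ a' x₂ y₂ b' = area x₁ y₁ a x₂ y₂ b := by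
  obtain ⟨a', ha', hS⟩ := (sqVertex_periodic x₁ y₁).exists_mem_Ico₀ two_pi_pos a
  obtain ⟨b', hb', hT⟩ := (triVertex_periodic x₂ y₂).exists_mem_Ico₀ two_pi_pos b
  have hsq := (h.1 _ (Or.inl (subset_convexHull ℝ _ ⟨0, rfl⟩))).1
  have htri := (h.1 _ (Or.inr (subset_convexHull ℝ _ ⟨0, rfl⟩))).1
  rw [sqVertex_eq] at hsq
  rw [triVertex_eq] at htri
  have h2 : √2 ≤ 2 := sqrt_le_iff.2 (by norm_num)
  have h3 : √3 ≤ 2 := sqrt_le_iff.2 (by norm_num)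
  obtain ⟨hx₁, hy₁⟩ :=
    mem_Icc_of_infDist_vertex_le (by rw [abs_of_nonneg (by positivity)]; linarith) hsq
  obtain ⟨hx₂, hy₂⟩ :=
    mem_Icc_of_infDist_vertex_le (by rw [abs_of_nonneg (by positivity)]; linarith) htri
  refine ⟨a', b', ⟨hx₁, hy₁, Set.Ico_subset_Icc_self ha', hx₂, hy₂, Set.Ico_subset_Icc_self hb'⟩,
    ?_, ?_⟩
  · simpa only [K2, hS, hT] using h
  · simp only [area, config, hS, hT]

end Compactness

lemma exists_forall_le_of_forall_exists_mem_le {X : Type*} [TopologicalSpace X] {f : X → ℝ}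
    (hf : LowerSemicontinuous f) {K : Set X} (hK : IsCompact K) {C : ℝ} {x₀ : X} (hx₀ : f x₀ ≤ C)
    {P : X → Prop} (hred : ∀ x, f x ≤ C → ∃ y ∈ K, P y ∧ f y ≤ f x) :
    ∃ m, (∀ x, f m ≤ f x) ∧ P m := by
  obtain ⟨y₀, hy₀K, -, hy₀⟩ := hred x₀ hx₀
  obtain ⟨m, -, hmin⟩ := (hf.lowerSemicontinuousOn K).exists_isMinOn ⟨y₀, hy₀K⟩ hK
  have hmC : f m ≤ C := (hmin hy₀K).trans (hy₀.trans hx₀)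
  have hglobal (x : X) : f m ≤ f x := by
    rcases le_total (f x) C with hx | hx
    · obtain ⟨y, hyK, -, hy⟩ := hred x hx
      exact (hmin hyK).trans hy
    · exact hmC.trans hx
  obtain ⟨z, -, hPz, hz⟩ := hred m hmC
  exact ⟨z, fun x ↦ hz.trans (hglobal x), hPz⟩

theorem exists_min_in_K2 :
    ∃ v0 : ℝ × ℝ × ℝ × ℝ × ℝ × ℝ,
      (∀ v : ℝ × ℝ × ℝ × ℝ × ℝ × ℝ,
        area v0.1 v0.2.1 v0.2.2.1 v0.2.2.2.1 v0.2.2.2.2.1 v0.2.2.2.2.2 ≤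
          area v.1 v.2.1 v.2.2.1 v.2.2.2.1 v.2.2.2.2.1 v.2.2.2.2.2) ∧
      K2 v0.1 v0.2.1 v0.2.2.1 v0.2.2.2.1 v0.2.2.2.2.1 v0.2.2.2.2.2 := by
  refine exists_forall_le_of_forall_exists_mem_le lowerSemicontinuous_area isCompact_paramBox
    (x₀ := (5 / 6 - √3 / 12, √3 / 6 - 1 / 12, π / 4 + π / 6, 3 / 4, √3 / 12, π / 2))
    area_witness_le (P := fun v ↦ K2 v.1 v.2.1 v.2.2.1 v.2.2.2.1 v.2.2.2.2.1 v.2.2.2.2.2)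
    fun v hv ↦ ?_
  obtain ⟨x₁, y₁, a, x₂, y₂, b, hK2, hle⟩ := exists_K2_area_le hv
  obtain ⟨a', b', hbox, hK2', heq⟩ := hK2.exists_mem_paramBox
  exact ⟨_, hbox, hK2', heq.trans_le hle⟩
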